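/- Let 0 < x ≤ π and 0 < a ≤ π, let M ≥ 0 and η ≥ 0, and let ψ : [0,π] → ℝ be a measurable nonnegative function satisfying ψ(θ) ≤ (a/x)·θ for all θ ∈ [0,x]. If ∫₀^π max(a − ψ(θ), 0)·sin θ dθ ≤ M·(a − sin a) + η, then M·(sin a)/a − (M − 1 + η/a) ≤ (sin x)/x. -/

import Mathlib

open Real MeasureTheory Set

/-!
On `[0, x]` the deficit `a - ψ θ` dominates the tent `a - (a / x) θ`, whose integral against
`sin θ dθ` is `a (1 - sin x / x)`. Truncating at zero and extending the range of integration to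
`[0, π]` only increase the integral, because `sin` is nonnegative there. Comparing with the assumed
upper bound and dividing by `a` gives the inequality.
-/

section Comparison

variable {μ : Measure ℝ} {b c d : ℝ} {f g w : ℝ → ℝ}

lemma intervalIntegral_mul_le_integral_max_zero_mul (hbc : b ≤ c) (hcd : c ≤ d)
    (hw : ∀ θ ∈ Icc b d, 0 ≤ w θ) (hgf : ∀ θ ∈ Icc b c, g θ ≤ f θ)
    (hg : IntervalIntegrable (fun θ => g θ * w θ) μ b c)
    (hf : IntervalIntegrable (fun θ => max (f θ) 0 * w θ) μ b d) :
    ∫ θ in b..c, g θ * w θ ∂μ ≤ ∫ θ in b..d, max (f θ) 0 * w θ ∂μ := by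
  have hf_left : IntervalIntegrable (fun θ => max (f θ) 0 * w θ) μ b c :=
    hf.mono_set (uIcc_subset_uIcc_left (mem_uIcc_of_le hbc hcd))
  calc ∫ θ in b..c, g θ * w θ ∂μ
      ≤ ∫ θ in b..c, max (f θ) 0 * w θ ∂μ :=
        intervalIntegral.integral_mono_on hbc hg hf_left fun θ hθ =>
          mul_le_mul_of_nonneg_right (le_max_of_le_left (hgf θ hθ))
            (hw θ (Icc_subset_Icc_right hcd hθ))
    _ ≤ ∫ θ in b..d, max (f θ) 0 * w θ ∂μ := by
        refine intervalIntegral.integral_mono_interval le_rfl hbc hcd ?_ hf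
        filter_upwards [ae_restrict_mem measurableSet_Ioc] with θ hθ
        exact mul_nonneg (le_max_right _ _) (hw θ (Ioc_subset_Icc_self hθ))

lemma intervalIntegrable_max_sub_zero_mul (a : ℝ)
    (hf : AEStronglyMeasurable f (μ.restrict (uIoc b c))) (hf_nonneg : ∀ θ ∈ uIoc b c, 0 ≤ f θ)
    (hw : IntervalIntegrable w μ b c) :
    IntervalIntegrable (fun θ => max (a - f θ) 0 * w θ) μ b c := by
  rw [intervalIntegrable_iff] at hw ⊢
  refine hw.bdd_mul (c := max a 0) ((aestronglyMeasurable_const.sub hf).sup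
    aestronglyMeasurable_const) ?_
  filter_upwards [ae_restrict_mem measurableSet_uIoc] with θ hθ
  rw [Real.norm_of_nonneg (le_max_right _ _)]
  exact max_le_max_right 0 (sub_le_self a (hf_nonneg θ hθ))

end Comparison

lemma integral_sub_mul_mul_sin (a k b c : ℝ) :
    ∫ θ in b..c, (a - k * θ) * sin θ =
      (a - k * b) * cos b - (a - k * c) * cos c - k * (sin c - sin b) := by
  have hderiv (θ : ℝ) :
      HasDerivAt (fun θ => -((a - k * θ) * cos θ) - k * sin θ) ((a - k * θ) * sin θ) θ := by
    have hlin : HasDerivAt (fun θ : ℝ => a - k * θ) (-(k * 1)) θ :=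
      ((hasDerivAt_id θ).const_mul k).const_sub a
    exact ((hlin.mul (hasDerivAt_cos θ)).neg.sub ((hasDerivAt_sin θ).const_mul k)).congr_deriv
      (by ring)
  rw [intervalIntegral.integral_eq_sub_of_hasDerivAt (fun θ _ => hderiv θ)
    (Continuous.intervalIntegrable (by fun_prop) _ _)]
  ring

lemma integral_sub_div_mul_mul_sin (a : ℝ) {x : ℝ} (hx : x ≠ 0) :
    ∫ θ in (0 : ℝ)..x, (a - a / x * θ) * sin θ = a * (1 - sin x / x) := by
  rw [integral_sub_mul_mul_sin, div_mul_cancel₀ a hx, cos_zero, sin_zero]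
  ring

lemma mul_one_sub_sin_div_le_integral {x a : ℝ} {ψ : ℝ → ℝ} (hx : 0 < x) (hxπ : x ≤ π)
    (hψ : IntervalIntegrable (fun θ => max (a - ψ θ) 0 * sin θ) volume 0 π)
    (hle : ∀ θ ∈ Icc 0 x, ψ θ ≤ a / x * θ) :
    a * (1 - sin x / x) ≤ ∫ θ in (0 : ℝ)..π, max (a - ψ θ) 0 * sin θ := by
  rw [← integral_sub_div_mul_mul_sin a hx.ne']
  exact intervalIntegral_mul_le_integral_max_zero_mul hx.le hxπ
    (fun θ hθ => sin_nonneg_of_mem_Icc hθ) (fun θ hθ => sub_le_sub_left (hle θ hθ) a)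
    (Continuous.intervalIntegrable (by fun_prop) _ _) hψ

theorem rearranged_inequality_general {x a M η : ℝ} {ψ : ℝ → ℝ}
    (hx : 0 < x) (hxπ : x ≤ π) (ha : 0 < a)
    (hψ : IntervalIntegrable (fun θ => max (a - ψ θ) 0 * sin θ) volume 0 π)
    (hle : ∀ θ ∈ Icc 0 x, ψ θ ≤ a / x * θ)
    (hint : ∫ θ in (0 : ℝ)..π, max (a - ψ θ) 0 * sin θ ≤ M * (a - sin a) + η) :
    M * (sin a / a) - (M - 1 + η / a) ≤ sin x / x := by
  have hbounds : a * (1 - sin x / x) ≤ M * (a - sin a) + η :=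
    (mul_one_sub_sin_div_le_integral hx hxπ hψ hle).trans hint
  have hdiv : 1 - sin x / x ≤ M - M * (sin a / a) + η / a :=
    calc 1 - sin x / x ≤ (M * (a - sin a) + η) / a := (le_div_iff₀' ha).2 hbounds
      _ = M - M * (sin a / a) + η / a := by field_simp
  linarith

/-- If a measurable nonnegative `ψ` on `[0,π]` satisfies `ψ θ ≤ (a/x)·θ` on `[0,x]` and
`∫₀^π max(a - ψ θ, 0) sin θ dθ ≤ M (a - sin a) + η`, then
`M (sin a)/a - (M - 1 + η/a) ≤ (sin x)/x`. -/
theorem rearranged_inequality (x a M η : ℝ)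
    (hx : 0 < x) (hxπ : x ≤ π) (ha : 0 < a) (haπ : a ≤ π)
    (hM : 0 ≤ M) (hη : 0 ≤ η)
    (ψ : ℝ → ℝ)
    (hmeas : Measurable ψ)
    (hnonneg : ∀ θ ∈ Icc (0:ℝ) π, 0 ≤ ψ θ)
    (hle : ∀ θ ∈ Icc (0:ℝ) x, ψ θ ≤ (a / x) * θ)
    (hint : (∫ θ in (0:ℝ)..π, max (a - ψ θ) 0 * Real.sin θ) ≤ M * (a - Real.sin a) + η) :
    M * (Real.sin a / a) - (M - 1 + η / a) ≤ Real.sin x / x := by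
  have hnonneg_uIoc : ∀ θ ∈ uIoc 0 π, 0 ≤ ψ θ := fun θ hθ =>
    hnonneg θ (Ioc_subset_Icc_self (uIoc_of_le pi_pos.le ▸ hθ))
  exact rearranged_inequality_general hx hxπ ha
    (intervalIntegrable_max_sub_zero_mul a hmeas.aestronglyMeasurable hnonneg_uIoc
      intervalIntegral.intervalIntegrable_sin) hle hint
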